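/- arXiv:2107.08281 — 2 statements merged into one kernel-verified Lean document; each statement's English description precedes it below -/
import Mathlib

section
/- Suppose H : ℝᵐ → ℝ is differentiable, μ-strongly convex with μ > 0, and has L-Lipschitz gradient; B : ℝⁿ → ℝᵐ is differentiable with each component Lipschitz with constant L̄_i and r := ΣL̄_i²; assumptions (A2) with constant τ > 0 and (A3) with constant ξ ≥ 0 hold; R : ℝⁿ → ℝ is convex; F := H∘B + R. Let y ∈ X and let x⁺ be a minimizer over X of x ↦ H(B(y)) + ∇(H∘B)(y)ᵀ(x − y) + (rL/2)‖x − y‖² + R(x). Then for every x ∈ X: F(x⁺) ≤ F(x) + rL⟨x⁺ − y, x − x⁺⟩ + ((rL + ξ)/2)‖x⁺ − y‖² − ((τμ − ξ)/2)‖x − y‖². -/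
open scoped RealInnerProductSpace

theorem aux_one_dim (φ φ' : ℝ → ℝ) (c : ℝ) (h : ∀ t, HasDerivAt φ (φ' t) t)
    (hb : ∀ t, 0 < t → t < 1 → φ' t ≤ φ' 0 + c * t) : φ 1 ≤ φ 0 + φ' 0 + c / 2 := by
  have hd : ∀ t, HasDerivAt (fun t => φ t - φ' 0 * t - c / 2 * t ^ 2)
      (φ' t - φ' 0 * 1 - c / 2 * (2 * t)) t := by
    intro t
    have h2 : HasDerivAt (fun t : ℝ => t ^ 2) (2 * t) t := by
      simpa using hasDerivAt_pow 2 t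
    exact ((h t).sub ((hasDerivAt_id t).const_mul (φ' 0))).sub (h2.const_mul (c / 2))
  have ha : AntitoneOn (fun t => φ t - φ' 0 * t - c / 2 * t ^ 2) (Set.Icc (0:ℝ) 1) := by
    apply antitoneOn_of_deriv_nonpos (convex_Icc 0 1)
    · exact fun t _ => (hd t).continuousAt.continuousWithinAt
    · exact fun t _ => (hd t).differentiableAt.differentiableWithinAt
    · intro t ht
      rw [interior_Icc] at ht
      rw [(hd t).deriv]
      have := hb t ht.1 ht.2
      linarith
  have := ha (Set.left_mem_Icc.2 zero_le_one) (Set.right_mem_Icc.2 zero_le_one) zero_le_one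
  norm_num at this
  linarith

theorem aux_taylor {n m : ℕ} (S : Submodule ℝ (EuclideanSpace ℝ (Fin n)))
    (B : EuclideanSpace ℝ (Fin n) → EuclideanSpace ℝ (Fin m))
    (hB : Differentiable ℝ B) (g : EuclideanSpace ℝ (Fin m)) (ξ : ℝ)
    (y z : EuclideanSpace ℝ (Fin n)) (hy : y ∈ S) (hz : z ∈ S)
    (h : ∀ x ∈ S, ⟪g, (fderiv ℝ B x - fderiv ℝ B y) (x - y)⟫ ≤ ξ * ‖x - y‖ ^ 2) :
    ⟪g, B z - B y⟫ ≤ ⟪g, fderiv ℝ B y (z - y)⟫ + ξ / 2 * ‖z - y‖ ^ 2 := by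
  have key := aux_one_dim (fun t => ⟪g, B (y + t • (z - y))⟫)
    (fun t => ⟪g, fderiv ℝ B (y + t • (z - y)) (z - y)⟫) (ξ * ‖z - y‖ ^ 2) ?_ ?_
  · simp only [one_smul, zero_smul, add_zero, add_sub_cancel] at key
    rw [inner_sub_right]
    linarith
  · intro t
    have h1 : HasDerivAt (fun t : ℝ => y + t • (z - y)) (z - y) t := by
      simpa using ((hasDerivAt_id t).smul_const (z - y)).const_add y
    have h2 := (hB (y + t • (z - y))).hasFDerivAt.comp_hasDerivAt t h1
    have h3 := (innerSL ℝ g).hasFDerivAt.comp_hasDerivAt t h2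
    exact h3
  · intro t ht _
    have h1 := h (y + t • (z - y)) (S.add_mem hy (S.smul_mem t (S.sub_mem hz hy)))
    rw [add_sub_cancel_left, map_smul, inner_smul_right, norm_smul, mul_pow, Real.norm_eq_abs,
      sq_abs, ContinuousLinearMap.sub_apply, inner_sub_right] at h1
    simp only [zero_smul, add_zero]
    have h2 : t * (⟪g, fderiv ℝ B (y + t • (z - y)) (z - y)⟫ - ⟪g, fderiv ℝ B y (z - y)⟫)
        ≤ t * (ξ * ‖z - y‖ ^ 2 * t) := by linarith
    have h3 := le_of_mul_le_mul_left h2 ht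
    linarith

theorem aux_descent {m : ℕ} (H : EuclideanSpace ℝ (Fin m) → ℝ)
    (hHdiff : Differentiable ℝ H) (L : ℝ)
    (hHlip : ∀ u v, ‖gradient H u - gradient H v‖ ≤ L * ‖u - v‖)
    (u v : EuclideanSpace ℝ (Fin m)) :
    H v ≤ H u + ⟪gradient H u, v - u⟫ + L / 2 * ‖v - u‖ ^ 2 := by
  have key := aux_one_dim (fun t => H (u + t • (v - u)))
    (fun t => ⟪gradient H (u + t • (v - u)), v - u⟫) (L * ‖v - u‖ ^ 2) ?_ ?_
  · simp only [one_smul, zero_smul, add_zero, add_sub_cancel] at key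
    linarith
  · intro t
    have h1 : HasDerivAt (fun t : ℝ => u + t • (v - u)) (v - u) t := by
      simpa using ((hasDerivAt_id t).smul_const (v - u)).const_add u
    have h2 := (hHdiff (u + t • (v - u))).hasGradientAt.hasFDerivAt.comp_hasDerivAt t h1
    exact h2
  · intro t ht _
    simp only [zero_smul, add_zero]
    have h1 := real_inner_le_norm (gradient H (u + t • (v - u)) - gradient H u) (v - u)
    have h2 := hHlip (u + t • (v - u)) u
    rw [add_sub_cancel_left, norm_smul, Real.norm_eq_abs, abs_of_pos ht] at h2
    rw [inner_sub_left] at h1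
    have h3 := mul_le_mul_of_nonneg_right h2 (norm_nonneg (v - u))
    nlinarith

theorem aux_limit (a b : ℝ) (h : ∀ t, 0 < t → t ≤ 1 → 0 ≤ a + b * t) : 0 ≤ a := by
  have h1 : Filter.Tendsto (fun t : ℝ => a + b * t) (nhdsWithin 0 (Set.Ioi 0)) (nhds a) := by
    have : Continuous (fun t : ℝ => a + b * t) := by fun_prop
    simpa using (this.tendsto 0).mono_left nhdsWithin_le_nhds
  refine ge_of_tendsto h1 ?_
  filter_upwards [Ioc_mem_nhdsGT (zero_lt_one' ℝ)] with t ht using h t ht.1 ht.2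

/-- Inequality (2.8) in the proof of Theorem 2.1: if `x⁺` minimizes the C-FISTA
proximal subproblem at `y ∈ X`, then for every `x ∈ X`,
`F(x⁺) ≤ F(x) + rL⟨x⁺ - y, x - x⁺⟩ + ((rL + ξ)/2)‖x⁺ - y‖² - ((τμ - ξ)/2)‖x - y‖²`. -/
theorem cfista_subproblem_objective_bound
    {n m : ℕ}
    (X : Set (EuclideanSpace ℝ (Fin n)))
    (hXclosed : IsClosed X) (hXconvex : Convex ℝ X)
    (H : EuclideanSpace ℝ (Fin m) → ℝ)
    (hHdiff : Differentiable ℝ H)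
    (μ L : ℝ) (hμ : 0 < μ) (hL : 0 < L)
    (hHsc : ∀ u v, H v ≥ H u + ⟪gradient H u, v - u⟫ + μ / 2 * ‖v - u‖ ^ 2)
    (hHlip : ∀ u v, ‖gradient H u - gradient H v‖ ≤ L * ‖u - v‖)
    (B : EuclideanSpace ℝ (Fin n) → EuclideanSpace ℝ (Fin m))
    (hB : Differentiable ℝ B)
    (Lbar : Fin m → ℝ) (hLbar : ∀ i, 0 ≤ Lbar i)
    (hA1lip : ∀ i, ∀ x y, |B x i - B y i| ≤ Lbar i * ‖x - y‖)
    (r : ℝ) (hr : r = ∑ i, Lbar i ^ 2)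
    (τ : ℝ) (hτ : 0 < τ)
    (hA2 : ∀ x ∈ Submodule.span ℝ X, ∀ y ∈ Submodule.span ℝ X,
      τ * ‖x - y‖ ^ 2 ≤ ‖B x - B y‖ ^ 2)
    (ξ : ℝ) (hξ : 0 ≤ ξ)
    (hA3 : ∀ x' ∈ Submodule.span ℝ X, ∀ x'' ∈ Submodule.span ℝ X,
      |⟪gradient H (B x'), (fderiv ℝ B x'' - fderiv ℝ B x') (x'' - x')⟫|
        ≤ ξ * ‖x'' - x'‖ ^ 2)
    (R : EuclideanSpace ℝ (Fin n) → ℝ) (hR : ConvexOn ℝ Set.univ R)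
    (F : EuclideanSpace ℝ (Fin n) → ℝ) (hF : ∀ x, F x = H (B x) + R x)
    (y : EuclideanSpace ℝ (Fin n)) (hy : y ∈ X)
    (xplus : EuclideanSpace ℝ (Fin n)) (hxplusX : xplus ∈ X)
    (hxplus : ∀ w ∈ X,
      H (B y) + ⟪gradient (fun v => H (B v)) y, xplus - y⟫
          + r * L / 2 * ‖xplus - y‖ ^ 2 + R xplus
        ≤ H (B y) + ⟪gradient (fun v => H (B v)) y, w - y⟫
          + r * L / 2 * ‖w - y‖ ^ 2 + R w) :
    ∀ x ∈ X,
      F xplus ≤ F x + r * L * ⟪xplus - y, x - xplus⟫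
        + (r * L + ξ) / 2 * ‖xplus - y‖ ^ 2 - (τ * μ - ξ) / 2 * ‖x - y‖ ^ 2 := by
  intro x hx
  have hyS := Submodule.subset_span (R := ℝ) hy
  have hpS := Submodule.subset_span (R := ℝ) hxplusX
  have hxS := Submodule.subset_span (R := ℝ) hx
  have hG : ∀ d, ⟪gradient (fun v => H (B v)) y, d⟫ = ⟪gradient H (B y), fderiv ℝ B y d⟫ := by
    intro d
    have h1 : HasFDerivAt (fun v => H (B v)) ((fderiv ℝ H (B y)).comp (fderiv ℝ B y)) y :=
      (hHdiff (B y)).hasFDerivAt.comp y (hB y).hasFDerivAt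
    simp [gradient, h1.fderiv]
  have t1 := aux_taylor (Submodule.span ℝ X) B hB (gradient H (B y)) ξ y xplus hyS hpS
    (fun z hz => (le_abs_self _).trans (hA3 y hyS z hz))
  have t2 := aux_taylor (Submodule.span ℝ X) B hB (-gradient H (B y)) ξ y x hyS hxS
    (fun z hz => by
      rw [inner_neg_left]
      exact (neg_le_abs _).trans (hA3 y hyS z hz))
  rw [inner_neg_left, inner_neg_left] at t2
  have hd := aux_descent H hHdiff L hHlip (B y) (B xplus)
  have hsc := hHsc (B y) (B x)
  have ha2 := mul_le_mul_of_nonneg_left (hA2 x hxS y hyS) (half_pos hμ).le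
  have hBn : ‖B xplus - B y‖ ^ 2 ≤ r * ‖xplus - y‖ ^ 2 := by
    rw [EuclideanSpace.norm_sq_eq, hr, Finset.sum_mul]
    refine Finset.sum_le_sum fun i _ => ?_
    rw [← mul_pow]
    exact pow_le_pow_left₀ (norm_nonneg _) (by simpa using hA1lip i xplus y) 2
  have hBn' := mul_le_mul_of_nonneg_left hBn (half_pos hL).le
  have hopt : 0 ≤ ⟪gradient (fun v => H (B v)) y, x - xplus⟫
      + r * L * ⟪xplus - y, x - xplus⟫ + (R x - R xplus) := by
    apply aux_limit _ (r * L / 2 * ‖x - xplus‖ ^ 2)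
    intro t ht ht1
    have hw : xplus + t • (x - xplus) ∈ X :=
      hXconvex.add_smul_sub_mem hxplusX hx ⟨ht.le, ht1⟩
    have h1 := hxplus _ hw
    have h2 := hR.2 (Set.mem_univ xplus) (Set.mem_univ x) (sub_nonneg.2 ht1) ht.le (by ring)
    have e1 : (1 - t) • xplus + t • x = xplus + t • (x - xplus) := by module
    have e2 : xplus + t • (x - xplus) - y = (xplus - y) + t • (x - xplus) := by module
    rw [e1] at h2
    rw [e2, norm_add_sq_real, inner_add_right, inner_smul_right, inner_smul_right, norm_smul,
      mul_pow, Real.norm_eq_abs, sq_abs] at h1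
    simp only [smul_eq_mul] at h2
    refine nonneg_of_mul_nonneg_right (a := t) ?_ ht
    nlinarith
  have hsplit : ⟪gradient (fun v => H (B v)) y, x - xplus⟫
      = ⟪gradient (fun v => H (B v)) y, x - y⟫
        - ⟪gradient (fun v => H (B v)) y, xplus - y⟫ := by
    rw [← inner_sub_right]; congr 1; abel
  rw [hsplit, hG, hG] at hopt
  rw [hF, hF]
  linarith
end

section
/- Let H : ℝⁿ → ℝ be differentiable, μ-strongly convex with μ > 0, with L-Lipschitz gradient, let R : ℝⁿ → ℝ be convex, set F := H + R, and let x* minimize F over a closed convex set X ⊆ ℝⁿ. With θ := √(μ/L) and α := √(L/μ), the iterates defined by y^k = (1/(1+θ))x^k + (θ/(1+θ))z^k, x^{k+1} = argmin_{x∈X}[H(y^k) + ∇H(y^k)ᵀ(x − y^k) + (L/2)‖x − y^k‖² + R(x)], z^{k+1} = (1−θ)z^k + θy^k + α(x^{k+1} − y^k), starting from (x⁰, z⁰) ∈ X × X, satisfy F(x^k) − F(x*) ≤ (1 − √(μ/L))^k ( F(x⁰) − F(x*) + (μ/2)‖z⁰ − x*‖² ). -/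
open scoped RealInnerProductSpace

theorem gf_descent {E : Type*} [NormedAddCommGroup E] [InnerProductSpace ℝ E] [CompleteSpace E]
    (H : E → ℝ) (hH : Differentiable ℝ H) (L : ℝ)
    (hlip : ∀ u v, ‖gradient H u - gradient H v‖ ≤ L * ‖u - v‖) (u v : E) :
    H v ≤ H u + ⟪gradient H u, v - u⟫ + L / 2 * ‖v - u‖ ^ 2 := by
  set d := v - u with hd
  let g : ℝ → ℝ := fun t => H (u + t • d) - t * ⟪gradient H u, d⟫ - L / 2 * ‖d‖ ^ 2 * t ^ 2
  have hg : ∀ t, HasDerivAt g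
      (⟪gradient H (u + t • d), d⟫ - ⟪gradient H u, d⟫ - L * ‖d‖ ^ 2 * t) t := by
    intro t
    have h1 : HasDerivAt (fun t : ℝ => u + t • d) d t := by
      simpa using ((hasDerivAt_id t).smul_const d).const_add u
    have h2 : HasFDerivAt H (InnerProductSpace.toDual ℝ E (gradient H (u + t • d))) (u + t • d) :=
      (hH (u + t • d)).hasGradientAt.hasFDerivAt
    have h3 : HasDerivAt (fun t : ℝ => H (u + t • d)) ⟪gradient H (u + t • d), d⟫ t := by
      have h := h2.comp_hasDerivAt t h1
      rw [InnerProductSpace.toDual_apply_apply] at h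
      exact h
    have h4 : HasDerivAt (fun t : ℝ => t * ⟪gradient H u, d⟫) ⟪gradient H u, d⟫ t := by
      simpa using (hasDerivAt_id t).mul_const ⟪gradient H u, d⟫
    have h5 : HasDerivAt (fun t : ℝ => L / 2 * ‖d‖ ^ 2 * t ^ 2) (L * ‖d‖ ^ 2 * t) t := by
      have := (hasDerivAt_pow 2 t).const_mul (L / 2 * ‖d‖ ^ 2)
      have e : L / 2 * ‖d‖ ^ 2 * (((2 : ℕ) : ℝ) * t ^ (2 - 1)) = L * ‖d‖ ^ 2 * t := by
        norm_num
        ring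
      rw [e] at this
      exact this
    exact (h3.sub h4).sub h5
  have hanti : AntitoneOn g (Set.Icc 0 1) := by
    apply antitoneOn_of_deriv_nonpos (convex_Icc 0 1)
    · exact fun t _ => (hg t).continuousAt.continuousWithinAt
    · exact fun t _ => (hg t).differentiableAt.differentiableWithinAt
    · intro t ht
      rw [interior_Icc] at ht
      rw [(hg t).deriv, ← inner_sub_left]
      have h1 := real_inner_le_norm (gradient H (u + t • d) - gradient H u) d
      have h2 := hlip (u + t • d) u
      rw [add_sub_cancel_left, norm_smul, Real.norm_of_nonneg ht.1.le] at h2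
      have h3 := mul_le_mul_of_nonneg_right h2 (norm_nonneg d)
      nlinarith
  have h := hanti (Set.left_mem_Icc.2 zero_le_one) (Set.right_mem_Icc.2 zero_le_one) zero_le_one
  simp only [g, one_smul, zero_smul, add_zero] at h
  rw [hd, add_sub_cancel, ← hd] at h
  linarith

theorem gf_prox {E : Type*} [NormedAddCommGroup E] [InnerProductSpace ℝ E]
    (X : Set E) (hX : Convex ℝ X) (R : E → ℝ) (hR : ConvexOn ℝ Set.univ R) (L : ℝ) (hL : 0 < L)
    (g y p : E) (hp : p ∈ X)
    (hmin : ∀ w ∈ X, ⟪g, p - y⟫ + L / 2 * ‖p - y‖ ^ 2 + R p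
      ≤ ⟪g, w - y⟫ + L / 2 * ‖w - y‖ ^ 2 + R w) (w : E) (hw : w ∈ X) :
    R p ≤ R w + ⟪g, w - p⟫ + L * ⟪p - y, w - p⟫ := by
  by_contra! hlt
  set A := ⟪g, w - p⟫ + L * ⟪p - y, w - p⟫ + R w - R p with hA
  have hA0 : A < 0 := by linarith
  have key : ∀ t : ℝ, 0 < t → t ≤ 1 → 0 ≤ A + L / 2 * ‖w - p‖ ^ 2 * t := by
    intro t ht ht1
    have hm : (1 - t) • p + t • w ∈ X := hX hp hw (by linarith) ht.le (by ring)
    have h1 := hmin _ hm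
    have h2 := hR.2 (Set.mem_univ p) (Set.mem_univ w) (by linarith : 0 ≤ 1 - t) ht.le (by ring)
    have e : (1 - t) • p + t • w - y = (p - y) + t • (w - p) := by module
    rw [e, inner_add_right, norm_add_sq_real, inner_smul_right, inner_smul_right, norm_smul,
      mul_pow, Real.norm_of_nonneg ht.le] at h1
    simp only [smul_eq_mul] at h2
    have : 0 ≤ t * (A + L / 2 * ‖w - p‖ ^ 2 * t) := by
      rw [hA]; nlinarith
    exact nonneg_of_mul_nonneg_right this ht
  set B := L / 2 * ‖w - p‖ ^ 2 with hB
  have hB0 : 0 ≤ B := by positivity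
  have hs : 0 < B - A := by linarith
  have h := key (-A / (2 * (B - A))) (div_pos (by linarith) (by linarith))
    ((div_le_one (by linarith)).2 (by linarith))
  have h3 : B * (-A / (2 * (B - A))) ≤ -A / 2 := by
    rw [mul_div_assoc', div_le_div_iff₀ (by linarith) (by norm_num)]
    nlinarith
  linarith

theorem gf_alg {E : Type*} [NormedAddCommGroup E] [InnerProductSpace ℝ E]
    (θ L : ℝ) (hθ : 0 < θ) (hθ1 : θ ≤ 1) (hL : 0 < L) (b c p : E) (fx fs fp : ℝ)
    (h1 : fp ≤ fx - θ ^ 2 * L / 2 * ‖-θ • b‖ ^ 2 + L * ⟪p, -θ • b - p⟫ + L / 2 * ‖p‖ ^ 2)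
    (h2 : fp ≤ fs - θ ^ 2 * L / 2 * ‖c‖ ^ 2 + L * ⟪p, c - p⟫ + L / 2 * ‖p‖ ^ 2) :
    fp - fs + θ ^ 2 * L / 2 * ‖(1 - θ) • b - c + θ⁻¹ • p‖ ^ 2
      ≤ (1 - θ) * (fx - fs + θ ^ 2 * L / 2 * ‖b - c‖ ^ 2) := by
  simp only [← real_inner_self_eq_norm_sq, inner_add_left, inner_add_right, inner_sub_left,
    inner_sub_right, real_inner_smul_left, real_inner_smul_right] at *
  rw [real_inner_comm b c, real_inner_comm b p, real_inner_comm c p] at *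
  have hb : 0 ≤ ⟪b, b⟫ := real_inner_self_nonneg
  generalize ⟪b, b⟫ = bb at *
  generalize ⟪c, c⟫ = cc at *
  generalize ⟪p, p⟫ = pp at *
  generalize ⟪b, c⟫ = bc at *
  generalize ⟪b, p⟫ = bp at *
  generalize ⟪c, p⟫ = cp at *
  have h1' := mul_le_mul_of_nonneg_left h1 (by linarith : 0 ≤ 1 - θ)
  have h2' := mul_le_mul_of_nonneg_left h2 hθ.le
  have e1 : 0 ≤ (1 - θ) * θ ^ 2 * L / 2 * (θ ^ 2 * bb) := by
    have : 0 ≤ 1 - θ := by linarith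
    positivity
  have e2 : 0 ≤ (1 - θ) * θ ^ 2 * L / 2 * (θ * bb) := by
    have : 0 ≤ 1 - θ := by linarith
    positivity
  field_simp
  nlinarith

/-- Remark 2.3 (GFISTA, the special case `B(x) = x` of C-FISTA): for `F = H + R`
with `H` `μ`-strongly convex with `L`-Lipschitz gradient and `R` convex, the
iterates with `θ = √(μ/L)`, `α = √(L/μ)` satisfy
`F(x^k) - F(x*) ≤ (1 - √(μ/L))^k (F(x⁰) - F(x*) + (μ/2)‖z⁰ - x*‖²)`. -/
theorem gfista_linear_convergence
    {n : ℕ}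
    (X : Set (EuclideanSpace ℝ (Fin n)))
    (hXclosed : IsClosed X) (hXconvex : Convex ℝ X)
    (H : EuclideanSpace ℝ (Fin n) → ℝ)
    (hHdiff : Differentiable ℝ H)
    (μ L : ℝ) (hμ : 0 < μ) (hL : 0 < L)
    (hHsc : ∀ u v, H v ≥ H u + ⟪gradient H u, v - u⟫ + μ / 2 * ‖v - u‖ ^ 2)
    (hHlip : ∀ u v, ‖gradient H u - gradient H v‖ ≤ L * ‖u - v‖)
    (R : EuclideanSpace ℝ (Fin n) → ℝ) (hR : ConvexOn ℝ Set.univ R)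
    (F : EuclideanSpace ℝ (Fin n) → ℝ) (hF : ∀ x, F x = H x + R x)
    (xstar : EuclideanSpace ℝ (Fin n)) (hxstarX : xstar ∈ X)
    (hxstar : ∀ w ∈ X, F xstar ≤ F w)
    (θ α : ℝ) (hθ : θ = Real.sqrt (μ / L)) (hα : α = Real.sqrt (L / μ))
    (x z y : ℕ → EuclideanSpace ℝ (Fin n))
    (hx0 : x 0 ∈ X) (hz0 : z 0 ∈ X)
    (hy : ∀ k, y k = (1 / (1 + θ)) • x k + (θ / (1 + θ)) • z k)
    (hxmem : ∀ k, x (k + 1) ∈ X)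
    (hxmin : ∀ k, ∀ w ∈ X,
      H (y k) + ⟪gradient H (y k), x (k + 1) - y k⟫
          + L / 2 * ‖x (k + 1) - y k‖ ^ 2 + R (x (k + 1))
        ≤ H (y k) + ⟪gradient H (y k), w - y k⟫
          + L / 2 * ‖w - y k‖ ^ 2 + R w)
    (hz : ∀ k, z (k + 1) = (1 - θ) • z k + θ • y k + α • (x (k + 1) - y k)) :
    ∀ k : ℕ,
      F (x k) - F xstar
        ≤ (1 - Real.sqrt (μ / L)) ^ k
          * (F (x 0) - F xstar + μ / 2 * ‖z 0 - xstar‖ ^ 2) := by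
  have hdesc := gf_descent H hHdiff L hHlip
  rcases Nat.eq_zero_or_pos n with hn | hn
  · subst hn
    intro k
    rw [Subsingleton.elim (x k) xstar, Subsingleton.elim (x 0) xstar,
      Subsingleton.elim (z 0) xstar]
    simp
  have hμL : μ ≤ L := by
    haveI : Nonempty (Fin n) := ⟨⟨0, hn⟩⟩
    obtain ⟨v, hv⟩ := exists_ne (0 : EuclideanSpace ℝ (Fin n))
    have h1 := hHsc 0 v
    have h2 := hdesc 0 v
    have h3 : 0 < ‖v - 0‖ ^ 2 := by
      have := norm_pos_iff.2 hv
      rw [sub_zero]; positivity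
    by_contra! hc
    nlinarith
  have hθ0 : 0 < θ := by rw [hθ]; exact Real.sqrt_pos.2 (div_pos hμ hL)
  have hθ1 : θ ≤ 1 := by
    rw [hθ]; exact Real.sqrt_le_one.2 ((div_le_one hL).2 hμL)
  have hθ2 : μ = θ ^ 2 * L := by
    rw [hθ, Real.sq_sqrt (div_pos hμ hL).le]; field_simp
  have hαθ : α = θ⁻¹ := by
    rw [hα, hθ, ← Real.sqrt_inv, inv_div]
  have hxX : ∀ k, x k ∈ X := fun k => by
    cases k with
    | zero => exact hx0
    | succ k => exact hxmem k
  have hmain : ∀ k, ∀ w ∈ X, F (x (k + 1)) ≤ F w - θ ^ 2 * L / 2 * ‖w - y k‖ ^ 2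
      + L * ⟪x (k + 1) - y k, (w - y k) - (x (k + 1) - y k)⟫
      + L / 2 * ‖x (k + 1) - y k‖ ^ 2 := by
    intro k w hw
    have h1 := gf_prox X hXconvex R hR L hL (gradient H (y k)) (y k) (x (k + 1)) (hxmem k)
      (fun w hw => by linarith [hxmin k w hw]) w hw
    have h2 := hdesc (y k) (x (k + 1))
    have h3 := hHsc (y k) w
    have e : w - x (k + 1) = (w - y k) - (x (k + 1) - y k) := by abel
    rw [e, inner_sub_right (gradient H (y k))] at h1
    rw [hF, hF, ← hθ2]
    linarith
  have hstep : ∀ k, F (x (k + 1)) - F xstar + μ / 2 * ‖z (k + 1) - xstar‖ ^ 2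
      ≤ (1 - θ) * (F (x k) - F xstar + μ / 2 * ‖z k - xstar‖ ^ 2) := by
    intro k
    have hne : 1 + θ ≠ 0 := by positivity
    have hxy : x k - y k = -θ • (z k - y k) := by
      have : x k = (1 + θ) • y k - θ • z k := by
        rw [hy k, smul_add, smul_smul, smul_smul, mul_one_div_cancel hne, mul_div_cancel₀ _ hne,
          one_smul]
        abel
      rw [this]; module
    have h1 := hmain k (x k) (hxX k)
    have h2 := hmain k xstar hxstarX
    rw [hxy] at h1
    have h := gf_alg θ L hθ0 hθ1 hL (z k - y k) (xstar - y k) (x (k + 1) - y k) _ _ _ h1 h2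
    have e1 : z (k + 1) - xstar
        = (1 - θ) • (z k - y k) - (xstar - y k) + θ⁻¹ • (x (k + 1) - y k) := by
      rw [hz k, hαθ]; module
    have e2 : z k - xstar = (z k - y k) - (xstar - y k) := by abel
    rw [e1, e2, hθ2]
    exact h
  have hind : ∀ k, F (x k) - F xstar + μ / 2 * ‖z k - xstar‖ ^ 2
      ≤ (1 - θ) ^ k * (F (x 0) - F xstar + μ / 2 * ‖z 0 - xstar‖ ^ 2) := by
    intro k
    induction k with
    | zero => simp
    | succ k ih =>
      have := mul_le_mul_of_nonneg_left ih (by linarith : 0 ≤ 1 - θ)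
      rw [pow_succ' (1 - θ) k, mul_assoc]
      linarith [hstep k]
  intro k
  rw [← hθ]
  have : 0 ≤ μ / 2 * ‖z k - xstar‖ ^ 2 := by positivity
  linarith [hind k]
end
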